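/- Let U, V', X, Y, Z, W' be countable types, let γ : U → V' → ℝ, α : X → Y → ℝ, β : Z → W' → ℝ all take values in [0,1], and let f : U × X → PMF Z and g : V' × Y → PMF W'. Suppose Wβ(f(u, x), g(v, y)) ≤ γ(u, v) + α(x, y) for all u ∈ U, x ∈ X, v ∈ V', y ∈ Y. Then for all u ∈ U, v ∈ V', μ ∈ PMF X, ν ∈ PMF Y: Wβ(μ.bind (fun x => f(u, x)), ν.bind (fun y => g(v, y))) ≤ γ(u, v) + Wα(μ, ν). (This is the strong lax bind condition for the Wasserstein lifting of the distribution monad.) -/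

import Mathlib

open scoped ENNReal

/-- `ω` is a coupling of `μ` and `ν`: a joint distribution with marginals `μ` and `ν`. -/
def IsCoupling {X Y : Type*} (μ : PMF X) (ν : PMF Y) (ω : PMF (X × Y)) : Prop :=
  (∀ x, ∑' y, ω (x, y) = μ x) ∧ ∀ y, ∑' x, ω (x, y) = ν y

/-- The transport cost `∑_{x,y} α(x,y) · ω(x,y)` of a joint distribution `ω`. -/
noncomputable def Wcost {X Y : Type*} (α : X → Y → ℝ) (ω : PMF (X × Y)) : ℝ :=
  ∑' p : X × Y, α p.1 p.2 * (ω p).toReal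

/-- The Wasserstein lifting `W α(μ, ν) = inf { Wcost α ω | ω coupling of μ, ν }`. -/
noncomputable def Wass {X Y : Type*} (α : X → Y → ℝ) (μ : PMF X) (ν : PMF Y) : ℝ :=
  sInf (Wcost α '' {ω | IsCoupling μ ν ω})

theorem isCoupling_iff_map {X Y : Type*} (μ : PMF X) (ν : PMF Y) (ω : PMF (X × Y)) :
    IsCoupling μ ν ω ↔ ω.map Prod.fst = μ ∧ ω.map Prod.snd = ν := by
  classical
  have h1 : ∀ x, (ω.map Prod.fst) x = ∑' y, ω (x, y) := by
    intro x
    rw [PMF.map_apply, ENNReal.tsum_prod', tsum_eq_single x]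
    · simp
    · intro b hb
      simp [hb.symm]
  have h2 : ∀ y, (ω.map Prod.snd) y = ∑' x, ω (x, y) := by
    intro y
    rw [PMF.map_apply, ENNReal.tsum_prod']
    refine tsum_congr fun x => ?_
    rw [tsum_eq_single y]
    · simp
    · intro b hb
      simp [hb.symm]
  unfold IsCoupling
  rw [PMF.ext_iff, PMF.ext_iff]
  simp only [h1, h2]

/-- extended cost -/
noncomputable def eCost {X Y : Type*} (α : X → Y → ℝ) (ω : PMF (X × Y)) : ℝ≥0∞ :=
  ∑' p : X × Y, ENNReal.ofReal (α p.1 p.2) * ω p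

theorem eCost_le_one {X Y : Type*} (α : X → Y → ℝ) (hα : ∀ x y, α x y ∈ Set.Icc (0 : ℝ) 1)
    (ω : PMF (X × Y)) : eCost α ω ≤ 1 := by
  rw [← ω.tsum_coe]
  refine ENNReal.tsum_le_tsum fun p => ?_
  refine mul_le_of_le_one_left zero_le ?_
  simpa using (hα p.1 p.2).2

theorem Wcost_eq {X Y : Type*} (α : X → Y → ℝ) (hα : ∀ x y, α x y ∈ Set.Icc (0 : ℝ) 1)
    (ω : PMF (X × Y)) : Wcost α ω = (eCost α ω).toReal := by
  unfold Wcost eCost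
  rw [ENNReal.tsum_toReal_eq]
  · refine tsum_congr fun p => ?_
    rw [ENNReal.toReal_mul, ENNReal.toReal_ofReal (hα _ _).1]
  · intro p
    exact ENNReal.mul_ne_top ENNReal.ofReal_ne_top (ω.apply_ne_top p)

theorem ofReal_Wcost {X Y : Type*} (α : X → Y → ℝ) (hα : ∀ x y, α x y ∈ Set.Icc (0 : ℝ) 1)
    (ω : PMF (X × Y)) : ENNReal.ofReal (Wcost α ω) = eCost α ω := by
  rw [Wcost_eq α hα, ENNReal.ofReal_toReal]
  exact ne_top_of_le_ne_top ENNReal.one_ne_top (eCost_le_one α hα ω)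

theorem Wcost_nonneg {X Y : Type*} (α : X → Y → ℝ) (hα : ∀ x y, α x y ∈ Set.Icc (0 : ℝ) 1)
    (ω : PMF (X × Y)) : 0 ≤ Wcost α ω := by
  rw [Wcost_eq α hα]; exact ENNReal.toReal_nonneg

theorem exists_coupling {X Y : Type*} (μ : PMF X) (ν : PMF Y) : ∃ ω, IsCoupling μ ν ω := by
  refine ⟨μ.bind fun x => ν.map fun y => (x, y), (isCoupling_iff_map _ _ _).2 ⟨?_, ?_⟩⟩
  · rw [PMF.map_bind]
    simp only [PMF.map_comp]
    have : ∀ x : X, (Prod.fst ∘ fun y : Y => (x, y)) = Function.const Y x := fun x => rfl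
    simp only [this, PMF.map_const, PMF.bind_pure]
  · rw [PMF.map_bind]
    simp only [PMF.map_comp]
    have : ∀ x : X, (Prod.snd ∘ fun y : Y => (x, y)) = id := fun x => rfl
    simp only [this, PMF.map_id, PMF.bind_const]

theorem exists_near {X Y : Type*} (α : X → Y → ℝ) (μ : PMF X) (ν : PMF Y) {r : ℝ}
    (hr : Wass α μ ν < r) : ∃ ω, IsCoupling μ ν ω ∧ Wcost α ω < r := by
  obtain ⟨ω, hω⟩ := exists_coupling μ ν
  obtain ⟨_, ⟨ω', h', rfl⟩, hlt⟩ :=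
    exists_lt_of_csInf_lt (s := Wcost α '' {ω | IsCoupling μ ν ω}) ⟨_, ω, hω, rfl⟩ hr
  exact ⟨ω', h', hlt⟩

theorem eCost_bind {X Y P : Type*} (β : X → Y → ℝ) (ω : PMF P) (c : P → PMF (X × Y)) :
    eCost β (ω.bind c) = ∑' p, ω p * eCost β (c p) := by
  unfold eCost
  simp only [PMF.bind_apply, ← ENNReal.tsum_mul_left]
  rw [ENNReal.tsum_comm]
  refine tsum_congr fun p => tsum_congr fun q => ?_
  ring

/-- the strong lax bind condition for the Wasserstein lifting of the
distribution monad. -/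
theorem wasserstein_strong_lax_bind
    {U V' X Y Z W' : Type*} [Countable U] [Countable V'] [Countable X] [Countable Y]
    [Countable Z] [Countable W']
    (γ : U → V' → ℝ) (α : X → Y → ℝ) (β : Z → W' → ℝ)
    (hγ : ∀ u v, γ u v ∈ Set.Icc (0 : ℝ) 1)
    (hα : ∀ x y, α x y ∈ Set.Icc (0 : ℝ) 1)
    (hβ : ∀ z w, β z w ∈ Set.Icc (0 : ℝ) 1)
    (f : U × X → PMF Z) (g : V' × Y → PMF W')
    (h : ∀ u x v y, Wass β (f (u, x)) (g (v, y)) ≤ γ u v + α x y) :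
    ∀ (u : U) (v : V') (μ : PMF X) (ν : PMF Y),
      Wass β (μ.bind fun x => f (u, x)) (ν.bind fun y => g (v, y)) ≤
        γ u v + Wass α μ ν := by
  intro u v μ ν
  refine le_of_forall_pos_le_add fun ε hε => ?_
  obtain ⟨ω, hω, hωc⟩ := exists_near α μ ν
    (show Wass α μ ν < Wass α μ ν + ε / 2 by linarith)
  have hc : ∀ p : X × Y, ∃ c, IsCoupling (f (u, p.1)) (g (v, p.2)) c ∧
      Wcost β c < γ u v + α p.1 p.2 + ε / 2 := fun p =>
    exists_near β _ _ (by linarith [h u p.1 v p.2])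
  choose c hcc hcost using hc
  rw [isCoupling_iff_map] at hω
  have hcoup : IsCoupling (μ.bind fun x => f (u, x)) (ν.bind fun y => g (v, y)) (ω.bind c) := by
    rw [isCoupling_iff_map, PMF.map_bind, PMF.map_bind]
    simp only [fun p => ((isCoupling_iff_map _ _ _).1 (hcc p)).1,
      fun p => ((isCoupling_iff_map _ _ _).1 (hcc p)).2]
    rw [← hω.1, ← hω.2, PMF.bind_map, PMF.bind_map]
    exact ⟨rfl, rfl⟩
  have hle : Wass β (μ.bind fun x => f (u, x)) (ν.bind fun y => g (v, y)) ≤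
      Wcost β (ω.bind c) := by
    refine csInf_le ⟨0, ?_⟩ ⟨_, hcoup, rfl⟩
    rintro _ ⟨ω', -, rfl⟩
    exact Wcost_nonneg β hβ ω'
  have h0 : 0 ≤ γ u v + ε / 2 := by linarith [(hγ u v).1]
  have hmain : Wcost β (ω.bind c) ≤ (γ u v + ε / 2) + Wcost α ω := by
    have hn := Wcost_nonneg α hα ω
    rw [← ENNReal.ofReal_le_ofReal_iff (by linarith), ofReal_Wcost β hβ,
      ENNReal.ofReal_add h0 hn, ofReal_Wcost α hα, eCost_bind]
    calc ∑' p, ω p * eCost β (c p)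
        ≤ ∑' p : X × Y, (ω p * ENNReal.ofReal (γ u v + ε / 2) +
            ENNReal.ofReal (α p.1 p.2) * ω p) := by
          refine ENNReal.tsum_le_tsum fun p => ?_
          rw [mul_comm (ENNReal.ofReal (α p.1 p.2)), ← mul_add,
            ← ENNReal.ofReal_add h0 (hα _ _).1, ← ofReal_Wcost β hβ]
          gcongr
          linarith [hcost p]
      _ = _ := by
          rw [ENNReal.tsum_add, ENNReal.tsum_mul_right, ω.tsum_coe, one_mul]
          rfl
  linarith
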